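/- Fix a real number t with 0 < t < 1. Let (a,b,e;c,d,f) be an admissible labeling of the edges of a tetrahedron with a+c ≠ b+d. Then lim_{k→∞} t^{−4k}·{a+2k, b+2k, e; c+2k, d+2k, f+2k}_u = 0 and lim_{k→∞} t^{−4k}·{a+2k, b+2k, e; c+2k, d+2k, f}_u = 0. -/

import Mathlib

open Filter Finset

/-- A triple of nonnegative integers is admissible if its sum is even and
it satisfies every triangle inequality. -/
def Admissible (a b c : ℕ) : Prop :=
  Even (a + b + c) ∧ a ≤ b + c ∧ b ≤ a + c ∧ c ≤ a + b

/-- A labeling (a,b,e;c,d,f) of the edges of a tetrahedron is admissible if the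
four vertex triples (a,d,e), (b,c,e), (a,b,f), (c,d,f) are admissible. -/
def TetAdmissible (a b e c d f : ℕ) : Prop :=
  Admissible a d e ∧ Admissible b c e ∧ Admissible a b f ∧ Admissible c d f

/-- The quantized integer `[n] = (t^{2n} - t^{-2n})/(t^2 - t^{-2})`. -/
noncomputable def qint (t : ℝ) (n : ℕ) : ℝ :=
  (t ^ (2 * n) - (t ^ (2 * n))⁻¹) / (t ^ 2 - (t ^ 2)⁻¹)

/-- The quantized factorial `[n]! = [n]·[n-1]!`, `[0]! = 1`. -/
noncomputable def qfact (t : ℝ) : ℕ → ℝ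
  | 0 => 1
  | n + 1 => qint t (n + 1) * qfact t n

/-- `θ(a,b,c)` for an admissible triple. -/
noncomputable def qtheta (t : ℝ) (a b c : ℕ) : ℝ :=
  (-1 : ℝ) ^ ((a + b + c) / 2) *
    (qfact t ((a + b + c) / 2 + 1) * qfact t ((a + b - c) / 2) *
      qfact t ((a + c - b) / 2) * qfact t ((b + c - a) / 2)) /
    (qfact t a * qfact t b * qfact t c)

/-- Product of the quantized factorials of the strand numbers of a triple. -/
noncomputable def strandProd (t : ℝ) (a b c : ℕ) : ℝ :=
  qfact t ((a + b - c) / 2) * qfact t ((b + c - a) / 2) * qfact t ((a + c - b) / 2)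

/-- The tetrahedral coefficient `Tet(a,b,e;c,d,f)`. -/
noncomputable def Tet (t : ℝ) (a b e c d f : ℕ) : ℝ :=
  (strandProd t a d e * strandProd t b c e * strandProd t a b f * strandProd t c d f) /
      (qfact t a * qfact t b * qfact t c * qfact t d * qfact t e * qfact t f) *
    ∑ s ∈ Finset.Icc
        (max ((a + d + e) / 2) (max ((b + c + e) / 2) (max ((a + b + f) / 2) ((c + d + f) / 2))))
        (min ((a + b + c + d) / 2) (min ((a + c + e + f) / 2) ((b + d + e + f) / 2))),
      ((-1 : ℝ) ^ s * qfact t (s + 1)) /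
        (qfact t ((a + b + c + d) / 2 - s) * qfact t ((a + c + e + f) / 2 - s) *
          qfact t ((b + d + e + f) / 2 - s) *
          qfact t (s - (a + d + e) / 2) * qfact t (s - (b + c + e) / 2) *
          qfact t (s - (a + b + f) / 2) * qfact t (s - (c + d + f) / 2))

/-- The unitary 6j-symbol `{a,b,e;c,d,f}_u`. -/
noncomputable def sixj (t : ℝ) (a b e c d f : ℕ) : ℝ :=
  Tet t a b e c d f /
    Real.sqrt (qtheta t a d e * qtheta t b c e * qtheta t a b f * qtheta t c d f)

/-- The q-Pochhammer symbol `(x;q)_n`. -/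
noncomputable def qPoch (x q : ℝ) (n : ℕ) : ℝ := ∏ i ∈ Finset.range n, (1 - x * q ^ i)

/-- The infinite q-Pochhammer symbol `(x;q)_∞`. -/
noncomputable def qPochInf (x q : ℝ) : ℝ := ∏' i : ℕ, (1 - x * q ^ i)

/-!
Write `q = t ^ 4`. Up to the factor `(q; q)_n`, which lies between `(q; q)_∞ > 0` and `1`, the
quantized factorial `[n]!` is `(1 - q)⁻ⁿ t^{-n(n-1)}`. The strand numbers of a tetrahedron are the
differences `B i - A j`, so the `6j`-symbol is a sum over `s` of terms in the quantized factorials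
of `B i - A j`, `A j + 1`, `s + 1`, `B i - s` and `s - A j` only. Since `∑ A j = ∑ B i`, the
exponents simplify: with `y i = B i - s`, the term of index `s` is at most a constant times
`t ^ (s + y 0 + y 1 + y 2 + 2 (y 0 * y 1 + y 0 * y 2 + y 1 * y 2))`.

The condition `a + c ≠ b + d` says that `B 1 ≠ B 2`, so `y 1 + y 2 ≥ 1` for every `s`, and then the
exponent is at least `B 0 + 2 * y 0 ≥ B 0 + 2 * (B 0 - B 1)`. Under both shifts this lower bound
grows at least like `6 * k`, which beats the prefactor `t ^ (-4 * k)`, while the number of terms is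
at most `e + 1`.
-/

section qPochhammer

variable {x q : ℝ}

theorem one_sub_mul_pow_mem_Icc (hx : x ∈ Set.Icc 0 1) (hq : q ∈ Set.Icc 0 1) (i : ℕ) :
    1 - x * q ^ i ∈ Set.Icc 0 1 :=
  ⟨sub_nonneg.2 (mul_le_one₀ hx.2 (pow_nonneg hq.1 i) (pow_le_one₀ hq.1 hq.2)),
    sub_le_self 1 (mul_nonneg hx.1 (pow_nonneg hq.1 i))⟩

theorem qPoch_le_one (hx : x ∈ Set.Icc 0 1) (hq : q ∈ Set.Icc 0 1) (n : ℕ) : qPoch x q n ≤ 1 :=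
  prod_le_one (fun i _ => (one_sub_mul_pow_mem_Icc hx hq i).1)
    fun i _ => (one_sub_mul_pow_mem_Icc hx hq i).2

theorem antitone_qPoch (hx : x ∈ Set.Icc 0 1) (hq : q ∈ Set.Icc 0 1) : Antitone (qPoch x q) := by
  refine antitone_nat_of_succ_le fun n => ?_
  rw [qPoch, prod_range_succ]
  exact mul_le_of_le_one_right (prod_nonneg fun i _ => (one_sub_mul_pow_mem_Icc hx hq i).1)
    (one_sub_mul_pow_mem_Icc hx hq n).2

theorem summable_neg_mul_pow (x : ℝ) (hq : |q| < 1) : Summable fun i : ℕ => -(x * q ^ i) :=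
  ((summable_geometric_of_abs_lt_one hq).mul_left x).neg

theorem tendsto_qPoch (x : ℝ) (hq : |q| < 1) :
    Tendsto (qPoch x q) atTop (nhds (qPochInf x q)) :=
  (Real.multipliable_one_add_of_summable (summable_neg_mul_pow x hq)).hasProd.tendsto_prod_nat

theorem qPochInf_pos (hx : x < 1) (hq0 : 0 ≤ q) (hq1 : q < 1) : 0 < qPochInf x q := by
  have factor_pos (i : ℕ) : 0 < 1 + -(x * q ^ i) := by
    rw [← sub_eq_add_neg, sub_pos]
    rcases le_total x 0 with hx0 | hx0
    · exact (mul_nonpos_of_nonpos_of_nonneg hx0 (pow_nonneg hq0 i)).trans_lt one_pos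
    · exact (mul_le_of_le_one_right hx0 (pow_le_one₀ hq0 hq1.le)).trans_lt hx
  have hq : |q| < 1 := by rwa [abs_of_nonneg hq0]
  calc 0 < Real.exp (∑' i : ℕ, Real.log (1 + -(x * q ^ i))) := Real.exp_pos _
    _ = qPochInf x q := Real.rexp_tsum_eq_tprod factor_pos
      (Real.summable_log_one_add_of_summable (summable_neg_mul_pow x hq))

theorem qPochInf_le_qPoch (hx : x ∈ Set.Icc 0 1) (hq0 : 0 ≤ q) (hq1 : q < 1) (n : ℕ) :
    qPochInf x q ≤ qPoch x q n :=
  (antitone_qPoch hx ⟨hq0, hq1.le⟩).le_of_tendsto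
    (tendsto_qPoch x (by rwa [abs_of_nonneg hq0])) n

end qPochhammer

section QuantizedFactorial

variable {t : ℝ}

theorem qint_succ (ht : t ≠ 0) (n : ℕ) :
    qint t (n + 1) = (1 - t ^ 4 * (t ^ 4) ^ n) / ((1 - t ^ 4) * t ^ (2 * n)) := by
  have denominator : t ^ 2 - (t ^ 2)⁻¹ = -(1 - t ^ 4) / t ^ 2 := by
    field_simp
    ring
  have numerator : t ^ (2 * (n + 1)) - (t ^ (2 * (n + 1)))⁻¹ =
      -(1 - t ^ 4 * (t ^ 4) ^ n) / (t ^ (2 * n) * t ^ 2) := by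
    field_simp
    ring
  rw [qint, denominator, numerator]
  field_simp

/-- The dominant factor of `[n]!`. It equals `(1 - q)⁻ⁿ t^{-n(n-1)}` with `q = t ^ 4`, written
without the truncated subtraction `n - 1`. -/
noncomputable def qfactLead (t : ℝ) (n : ℕ) : ℝ :=
  (t / (1 - t ^ 4)) ^ n / t ^ n ^ 2

theorem qfact_eq_qfactLead_mul_qPoch (ht : t ≠ 0) (n : ℕ) :
    qfact t n = qfactLead t n * qPoch (t ^ 4) (t ^ 4) n := by
  induction n with
  | zero => simp [qfact, qfactLead, qPoch]
  | succ n ih =>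
    have lead_succ : qfactLead t (n + 1) = qfactLead t n / ((1 - t ^ 4) * t ^ (2 * n)) := by
      unfold qfactLead
      field_simp
      ring
    rw [qfact, ih, qint_succ ht, lead_succ, qPoch, qPoch, prod_range_succ]
    ring

theorem prod_qfactLead (t : ℝ) {ι : Type*} (S : Finset ι) (n : ι → ℕ) :
    ∏ i ∈ S, qfactLead t (n i) = (t / (1 - t ^ 4)) ^ (∑ i ∈ S, n i) / t ^ (∑ i ∈ S, n i ^ 2) := by
  simp only [qfactLead, prod_div_distrib, prod_pow_eq_pow_sum]

variable (ht0 : 0 < t) (ht1 : t < 1)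
include ht0 ht1

theorem pow_four_mem_Ioo : t ^ 4 ∈ Set.Ioo 0 1 :=
  ⟨pow_pos ht0 4, pow_lt_one₀ ht0.le ht1 four_ne_zero⟩

theorem qfactLead_pos (n : ℕ) : 0 < qfactLead t n := by
  have := sub_pos.2 (pow_four_mem_Ioo ht0 ht1).2
  unfold qfactLead
  positivity

theorem qfact_le_qfactLead (n : ℕ) : qfact t n ≤ qfactLead t n := by
  have hq := Set.Ioo_subset_Icc_self (pow_four_mem_Ioo ht0 ht1)
  rw [qfact_eq_qfactLead_mul_qPoch ht0.ne']
  exact mul_le_of_le_one_right (qfactLead_pos ht0 ht1 n).le (qPoch_le_one hq hq n)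

theorem qPochInf_pow_four_pos : 0 < qPochInf (t ^ 4) (t ^ 4) :=
  have hq := pow_four_mem_Ioo ht0 ht1
  qPochInf_pos hq.2 hq.1.le hq.2

theorem qPochInf_mul_qfactLead_le_qfact (n : ℕ) :
    qPochInf (t ^ 4) (t ^ 4) * qfactLead t n ≤ qfact t n := by
  have hq := pow_four_mem_Ioo ht0 ht1
  rw [qfact_eq_qfactLead_mul_qPoch ht0.ne', mul_comm]
  exact mul_le_mul_of_nonneg_left
    (qPochInf_le_qPoch (Set.Ioo_subset_Icc_self hq) hq.1.le hq.2 n) (qfactLead_pos ht0 ht1 n).le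

theorem qfact_pos (n : ℕ) : 0 < qfact t n :=
  (mul_pos (qPochInf_pow_four_pos ht0 ht1) (qfactLead_pos ht0 ht1 n)).trans_le
    (qPochInf_mul_qfactLead_le_qfact ht0 ht1 n)

end QuantizedFactorial

section Racah

variable {A : Fin 4 → ℕ} {B : Fin 3 → ℕ} {s : ℕ}

/-- The square of the term of index `s` in Racah's formula for the unitary `6j`-symbol, in terms of
the numbers `A j` and `B i` and of a function `φ` in place of the quantized factorial. Squaring
removes the square root in the normalization of the symbol. -/
noncomputable def racahSq (φ : ℕ → ℝ) (A : Fin 4 → ℕ) (B : Fin 3 → ℕ) (s : ℕ) : ℝ :=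
  (∏ i, ∏ j, φ (B i - A j)) / (∏ j, φ (A j + 1)) *
    (φ (s + 1) / ((∏ i, φ (B i - s)) * ∏ j, φ (s - A j))) ^ 2

/-- The order of vanishing at `t = 0` of the term of index `s` in Racah's formula for the unitary
`6j`-symbol. -/
def racahDegree (B : Fin 3 → ℕ) (s : ℕ) : ℕ :=
  s + ∑ i, (B i - s) +
    2 * ((B 0 - s) * (B 1 - s) + (B 0 - s) * (B 2 - s) + (B 1 - s) * (B 2 - s))

-- This identity compares the exponents of `t / (1 - t ^ 4)` on the two sides of
-- `racahSq_qfactLead`; the quadratic one does the same for the remaining powers of `t`.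
theorem racah_linear_exponents (hAB : ∑ j, A j = ∑ i, B i) (hA : ∀ j, A j ≤ s)
    (hB : ∀ i, s ≤ B i) :
    ∑ i, ∑ j, (B i - A j) + 2 * (s + 1) + 2 =
      ∑ j, (A j + 1) + 2 * (∑ i, (B i - s) + ∑ j, (s - A j)) := by
  have hBA i j := (hA j).trans (hB i)
  zify [hA, hB, hBA] at hAB ⊢
  simp only [Fin.sum_univ_four, Fin.sum_univ_three] at hAB ⊢
  linear_combination -2 * hAB

theorem racah_quadratic_exponents (hAB : ∑ j, A j = ∑ i, B i) (hA : ∀ j, A j ≤ s)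
    (hB : ∀ i, s ≤ B i) :
    ∑ i, ∑ j, (B i - A j) ^ 2 + 2 * (s + 1) ^ 2 + 2 * racahDegree B s + 2 =
      ∑ j, (A j + 1) ^ 2 + 2 * (∑ i, (B i - s) ^ 2 + ∑ j, (s - A j) ^ 2) := by
  have hBA i j := (hA j).trans (hB i)
  unfold racahDegree
  zify [hA, hB, hBA] at hAB ⊢
  simp only [Fin.sum_univ_four, Fin.sum_univ_three] at hAB ⊢
  have hA3 : (A 3 : ℤ) = B 0 + B 1 + B 2 - A 0 - A 1 - A 2 := by linear_combination hAB
  rw [hA3]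
  ring

theorem racahSq_qfactLead {t : ℝ} (ht : t ≠ 0) (hq : 1 - t ^ 4 ≠ 0)
    (hAB : ∑ j, A j = ∑ i, B i) (hA : ∀ j, A j ≤ s) (hB : ∀ i, s ≤ B i) :
    racahSq (qfactLead t) A B s = ((1 - t ^ 4) * t ^ racahDegree B s) ^ 2 := by
  obtain ⟨r, hr⟩ : ∃ r, r = t / (1 - t ^ 4) := ⟨_, rfl⟩
  have hr0 : r ≠ 0 := hr ▸ div_ne_zero ht hq
  have one_sub_eq : 1 - t ^ 4 = t / r := by rw [hr, div_div_cancel₀ ht]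
  have linear := congrArg (r ^ ·) (racah_linear_exponents hAB hA hB)
  have quadratic := congrArg (t ^ ·) (racah_quadratic_exponents hAB hA hB)
  simp only [pow_add, pow_mul'] at linear quadratic
  simp only [racahSq, prod_qfactLead, prod_pow_eq_pow_sum, prod_div_distrib]
  simp only [qfactLead, one_sub_eq]
  field_simp
  linear_combination congrArg₂ (· * ·) linear quadratic.symm

theorem racahSq_le_div {φ ψ : ℕ → ℝ} {ε : ℝ} (hε : 0 < ε) (hψ : ∀ n, 0 < ψ n)
    (hlower : ∀ n, ε * ψ n ≤ φ n) (hupper : ∀ n, φ n ≤ ψ n)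
    (A : Fin 4 → ℕ) (B : Fin 3 → ℕ) (s : ℕ) :
    racahSq φ A B s ≤ racahSq ψ A B s / ε ^ 18 := by
  have hφ n : 0 < φ n := (mul_pos hε (hψ n)).trans_le (hlower n)
  have prod_lower {m : ℕ} (n : Fin m → ℕ) : ε ^ m * ∏ j, ψ (n j) ≤ ∏ j, φ (n j) := by
    calc ε ^ m * ∏ j, ψ (n j) = ∏ j, ε * ψ (n j) := by simp [prod_mul_distrib]
      _ ≤ ∏ j, φ (n j) := prod_le_prod (fun j _ => (mul_pos hε (hψ _)).le) fun j _ => hlower _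
  have prod_ψ_pos {m : ℕ} (n : Fin m → ℕ) : 0 < ∏ j, ψ (n j) := prod_pos fun j _ => hψ _
  have prod_φ_pos {m : ℕ} (n : Fin m → ℕ) : 0 < ∏ j, φ (n j) := prod_pos fun j _ => hφ _
  have strands : ∏ i, ∏ j, φ (B i - A j) ≤ ∏ i, ∏ j, ψ (B i - A j) :=
    prod_le_prod (fun i _ => prod_nonneg fun j _ => (hφ _).le) fun i _ =>
      prod_le_prod (fun j _ => (hφ _).le) fun j _ => hupper _
  have strands_nonneg : 0 ≤ ∏ i, ∏ j, ψ (B i - A j) :=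
    prod_nonneg fun i _ => (prod_ψ_pos _).le
  calc racahSq φ A B s
      ≤ (∏ i, ∏ j, ψ (B i - A j)) / (ε ^ 4 * ∏ j, ψ (A j + 1)) *
        (ψ (s + 1) / ((ε ^ 3 * ∏ i, ψ (B i - s)) * (ε ^ 4 * ∏ j, ψ (s - A j)))) ^ 2 := by
        have := prod_ψ_pos fun j => A j + 1
        have := prod_ψ_pos fun i => B i - s
        have := prod_ψ_pos fun j => s - A j
        have := prod_φ_pos fun i => B i - s
        have := prod_φ_pos fun j => s - A j
        have := (hφ (s + 1)).le
        have := (hψ (s + 1)).le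
        unfold racahSq
        gcongr
        · exact prod_lower fun j => A j + 1
        · exact hupper _
        · exact prod_lower fun i => B i - s
        · exact prod_lower fun j => s - A j
    _ = racahSq ψ A B s / ε ^ 18 := by
        unfold racahSq
        field_simp

/-- The constant in the bound of the terms of Racah's formula by powers of `t`. The exponent `9` is
half the number of quantized factorials in the denominator of `racahSq`, counted with
multiplicity. -/
noncomputable def racahConst (t : ℝ) : ℝ :=
  (1 - t ^ 4) / qPochInf (t ^ 4) (t ^ 4) ^ 9

theorem racahConst_pos {t : ℝ} (ht0 : 0 < t) (ht1 : t < 1) : 0 < racahConst t :=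
  div_pos (sub_pos.2 (pow_four_mem_Ioo ht0 ht1).2) (pow_pos (qPochInf_pow_four_pos ht0 ht1) 9)

theorem sqrt_racahSq_qfact_le {t : ℝ} (ht0 : 0 < t) (ht1 : t < 1)
    (hAB : ∑ j, A j = ∑ i, B i) (hA : ∀ j, A j ≤ s) (hB : ∀ i, s ≤ B i) :
    √(racahSq (qfact t) A B s) ≤ racahConst t * t ^ racahDegree B s := by
  have hq : 1 - t ^ 4 ≠ 0 := (sub_pos.2 (pow_four_mem_Ioo ht0 ht1).2).ne'
  have hconst := racahConst_pos ht0 ht1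
  refine Real.sqrt_le_iff.2 ⟨by positivity, ?_⟩
  calc racahSq (qfact t) A B s
      ≤ racahSq (qfactLead t) A B s / qPochInf (t ^ 4) (t ^ 4) ^ 18 :=
        racahSq_le_div (qPochInf_pow_four_pos ht0 ht1) (qfactLead_pos ht0 ht1)
          (qPochInf_mul_qfactLead_le_qfact ht0 ht1) (qfact_le_qfactLead ht0 ht1) A B s
    _ = (racahConst t * t ^ racahDegree B s) ^ 2 := by
        rw [racahSq_qfactLead ht0.ne' hq hAB hA hB, racahConst]
        ring

theorem add_two_mul_sub_le_racahDegree (h0 : s ≤ B 0) (h1 : s ≤ B 1) (h2 : s ≤ B 2)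
    (hne : B 1 ≠ B 2) : B 0 + 2 * (B 0 - B 1) ≤ racahDegree B s := by
  have one_le : 1 ≤ (B 1 - s) + (B 2 - s) := by omega
  have := Nat.mul_le_mul_left (B 0 - s) one_le
  simp only [racahDegree, Fin.sum_univ_three]
  rw [mul_add] at this
  omega

end Racah

section SquareRoot

theorem abs_div_sqrt_le (x y : ℝ) : |x / √y| ≤ |x| / √|y| := by
  rcases le_total 0 y with hy | hy
  · rw [abs_div, abs_of_nonneg hy, abs_of_nonneg (Real.sqrt_nonneg y)]
  · rw [Real.sqrt_eq_zero_of_nonpos hy, div_zero, abs_zero]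
    positivity

theorem div_mul_div_sqrt_div_sq {P Q D : ℝ} (hP : 0 < P) (hQ : 0 < Q) (hD : 0 < D) (x : ℝ) :
    P / D * |x| / √(Q * P / D ^ 2) = √(P / Q * x ^ 2) := by
  rw [Real.sqrt_mul (div_pos hP hQ).le, Real.sqrt_sq_eq_abs, Real.sqrt_div (mul_pos hQ hP).le,
    Real.sqrt_sq hD.le, Real.sqrt_mul hQ.le, Real.sqrt_div hP.le]
  have := Real.sqrt_pos.2 hP
  have := Real.sqrt_pos.2 hQ
  field_simp
  rw [Real.sq_sqrt hP.le, mul_comm]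

end SquareRoot

section Shift

variable {a b c : ℕ}

theorem Admissible.add_add (h : Admissible a b c) (k : ℕ) : Admissible (a + k) (b + k) c := by
  simp only [Admissible, Nat.even_iff] at h ⊢
  omega

theorem Admissible.add_add_add (h : Admissible a b c) (k : ℕ) :
    Admissible (a + 2 * k) (b + 2 * k) (c + 2 * k) := by
  simp only [Admissible, Nat.even_iff] at h ⊢
  omega

end Shift

section SixJ

/-- The half sums `A_1, …, A_4` of the vertex triples of a tetrahedron, indexed from `0`. -/
def vertexHalfSum (a b e c d f : ℕ) : Fin 4 → ℕ :=
  ![(a + d + e) / 2, (b + c + e) / 2, (a + b + f) / 2, (c + d + f) / 2]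

/-- The half sums `B_1, B_2, B_3` of the quadrilaterals of a tetrahedron, indexed from `0`. -/
def quadHalfSum (a b e c d f : ℕ) : Fin 3 → ℕ :=
  ![(a + b + c + d) / 2, (a + c + e + f) / 2, (b + d + e + f) / 2]

/-- The range of summation in Racah's formula. -/
def racahRange (A : Fin 4 → ℕ) (B : Fin 3 → ℕ) : Finset ℕ :=
  Icc (univ.sup A) (univ.inf' univ_nonempty B)

theorem mem_racahRange {A : Fin 4 → ℕ} {B : Fin 3 → ℕ} {s : ℕ} :
    s ∈ racahRange A B ↔ (∀ j, A j ≤ s) ∧ ∀ i, s ≤ B i := by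
  simp [racahRange]

theorem card_racahRange_le_sub_add_one (A : Fin 4 → ℕ) (B : Fin 3 → ℕ) (i : Fin 3) (j : Fin 4) :
    #(racahRange A B) ≤ B i - A j + 1 := by
  have lower : A j ≤ univ.sup A := le_sup (mem_univ j)
  have upper : univ.inf' univ_nonempty B ≤ B i := inf'_le B (mem_univ i)
  rw [racahRange, Nat.card_Icc]
  omega

variable {a b e c d f : ℕ}

theorem TetAdmissible.sum_vertexHalfSum (h : TetAdmissible a b e c d f) :
    ∑ j, vertexHalfSum a b e c d f j = ∑ i, quadHalfSum a b e c d f i := by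
  obtain ⟨⟨⟨n₁, hn₁⟩, -⟩, ⟨⟨n₂, hn₂⟩, -⟩, ⟨⟨n₃, hn₃⟩, -⟩, ⟨n₄, hn₄⟩, -⟩ := h
  simp only [vertexHalfSum, quadHalfSum, Fin.sum_univ_four, Fin.sum_univ_three, Matrix.cons_val]
  omega

theorem TetAdmissible.quadHalfSum_one_ne_two (h : TetAdmissible a b e c d f)
    (hne : a + c ≠ b + d) : quadHalfSum a b e c d f 1 ≠ quadHalfSum a b e c d f 2 := by
  obtain ⟨⟨⟨n₁, hn₁⟩, -⟩, ⟨⟨n₂, hn₂⟩, -⟩, ⟨⟨n₃, hn₃⟩, -⟩, ⟨n₄, hn₄⟩, -⟩ := h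
  simp only [quadHalfSum, Matrix.cons_val]
  omega

theorem TetAdmissible.card_racahRange_le (h : TetAdmissible a b e c d f) :
    #(racahRange (vertexHalfSum a b e c d f) (quadHalfSum a b e c d f)) ≤ e + 1 := by
  have strand_le : quadHalfSum a b e c d f 1 - vertexHalfSum a b e c d f 3 ≤ e := by
    obtain ⟨⟨-, hade, -⟩, -⟩ := h
    simp only [vertexHalfSum, quadHalfSum, Matrix.cons_val]
    omega
  exact (card_racahRange_le_sub_add_one _ _ 1 3).trans (Nat.add_le_add_right strand_le 1)

theorem TetAdmissible.strandProd_mul (h : TetAdmissible a b e c d f) (t : ℝ) :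
    strandProd t a d e * strandProd t b c e * strandProd t a b f * strandProd t c d f =
      ∏ i, ∏ j, qfact t (quadHalfSum a b e c d f i - vertexHalfSum a b e c d f j) := by
  obtain ⟨⟨⟨n₁, hn₁⟩, -⟩, ⟨⟨n₂, hn₂⟩, -⟩, ⟨⟨n₃, hn₃⟩, -⟩, ⟨n₄, hn₄⟩, -⟩ := h
  simp only [vertexHalfSum, quadHalfSum, Fin.prod_univ_four, Fin.prod_univ_three, Matrix.cons_val,
    strandProd]
  rw [show (a + b + c + d) / 2 - (a + d + e) / 2 = (b + c - e) / 2 by omega,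
    show (a + b + c + d) / 2 - (b + c + e) / 2 = (a + d - e) / 2 by omega,
    show (a + b + c + d) / 2 - (a + b + f) / 2 = (c + d - f) / 2 by omega,
    show (a + b + c + d) / 2 - (c + d + f) / 2 = (a + b - f) / 2 by omega,
    show (a + c + e + f) / 2 - (a + d + e) / 2 = (c + f - d) / 2 by omega,
    show (a + c + e + f) / 2 - (b + c + e) / 2 = (a + f - b) / 2 by omega,
    show (a + c + e + f) / 2 - (a + b + f) / 2 = (c + e - b) / 2 by omega,
    show (a + c + e + f) / 2 - (c + d + f) / 2 = (a + e - d) / 2 by omega,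
    show (b + d + e + f) / 2 - (a + d + e) / 2 = (b + f - a) / 2 by omega,
    show (b + d + e + f) / 2 - (b + c + e) / 2 = (d + f - c) / 2 by omega,
    show (b + d + e + f) / 2 - (a + b + f) / 2 = (d + e - a) / 2 by omega,
    show (b + d + e + f) / 2 - (c + d + f) / 2 = (b + e - c) / 2 by omega]
  ring

theorem TetAdmissible.Tet_eq (h : TetAdmissible a b e c d f) (t : ℝ) :
    Tet t a b e c d f =
      (∏ i, ∏ j, qfact t (quadHalfSum a b e c d f i - vertexHalfSum a b e c d f j)) /
          (qfact t a * qfact t b * qfact t c * qfact t d * qfact t e * qfact t f) *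
        ∑ s ∈ racahRange (vertexHalfSum a b e c d f) (quadHalfSum a b e c d f),
          (-1) ^ s * (qfact t (s + 1) / ((∏ i, qfact t (quadHalfSum a b e c d f i - s)) *
            ∏ j, qfact t (s - vertexHalfSum a b e c d f j))) := by
  rw [Tet, h.strandProd_mul]
  congr 1
  refine sum_congr ?_ fun s _ => ?_
  · ext s
    simp [mem_racahRange, vertexHalfSum, quadHalfSum, Fin.forall_fin_succ]
  · simp only [vertexHalfSum, quadHalfSum, Fin.prod_univ_four, Fin.prod_univ_three,
      Matrix.cons_val]
    ring

variable {t : ℝ} (ht0 : 0 < t) (ht1 : t < 1)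
include ht0 ht1

theorem abs_qtheta (a b c : ℕ) :
    |qtheta t a b c| =
      qfact t ((a + b + c) / 2 + 1) * strandProd t a b c / (qfact t a * qfact t b * qfact t c) := by
  have hpos := qfact_pos ht0 ht1
  simp only [qtheta, strandProd, abs_div, abs_mul, abs_pow, abs_neg, abs_one, one_pow,
    abs_of_pos (hpos _)]
  ring

theorem abs_prod_qtheta (h : TetAdmissible a b e c d f) :
    |qtheta t a d e * qtheta t b c e * qtheta t a b f * qtheta t c d f| =
      (∏ j, qfact t (vertexHalfSum a b e c d f j + 1)) *
        (∏ i, ∏ j, qfact t (quadHalfSum a b e c d f i - vertexHalfSum a b e c d f j)) /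
      (qfact t a * qfact t b * qfact t c * qfact t d * qfact t e * qfact t f) ^ 2 := by
  rw [← h.strandProd_mul]
  simp only [abs_mul, abs_qtheta ht0 ht1, Fin.prod_univ_four, vertexHalfSum, Matrix.cons_val]
  ring

theorem abs_sixj_le_sum_sqrt_racahSq (h : TetAdmissible a b e c d f) :
    |sixj t a b e c d f| ≤
      ∑ s ∈ racahRange (vertexHalfSum a b e c d f) (quadHalfSum a b e c d f),
        √(racahSq (qfact t) (vertexHalfSum a b e c d f) (quadHalfSum a b e c d f) s) := by
  have hpos := qfact_pos ht0 ht1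
  -- Only `≤` holds here: the product of the four `θ` has sign `(-1) ^ (a + b + c + d + e + f)`, and
  -- `√` of a negative number is `0`.
  refine (abs_div_sqrt_le _ _).trans ?_
  rw [abs_prod_qtheta ht0 ht1 h, h.Tet_eq]
  set A := vertexHalfSum a b e c d f
  set B := quadHalfSum a b e c d f
  set edges := qfact t a * qfact t b * qfact t c * qfact t d * qfact t e * qfact t f
  have edges_pos : 0 < edges :=
    mul_pos (mul_pos (mul_pos (mul_pos (mul_pos (hpos a) (hpos b)) (hpos c)) (hpos d)) (hpos e))
      (hpos f)
  have strands_pos : 0 < ∏ i, ∏ j, qfact t (B i - A j) :=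
    prod_pos fun i _ => prod_pos fun j _ => hpos _
  have vertices_pos : 0 < ∏ j, qfact t (A j + 1) := prod_pos fun j _ => hpos _
  simp only [racahSq, ← div_mul_div_sqrt_div_sq strands_pos vertices_pos edges_pos, ← sum_div,
    ← mul_sum]
  rw [abs_mul, abs_of_pos (div_pos strands_pos edges_pos)]
  gcongr
  refine (abs_sum_le_sum_abs _ _).trans_eq (sum_congr rfl fun s _ => ?_)
  rw [abs_mul, abs_neg_one_pow, one_mul]

theorem abs_sixj_le (h : TetAdmissible a b e c d f) (hne : a + c ≠ b + d) :
    |sixj t a b e c d f| ≤ (e + 1) * (racahConst t *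
      t ^ ((a + b + c + d) / 2 + 2 * ((a + b + c + d) / 2 - (a + c + e + f) / 2))) := by
  have hconst := racahConst_pos ht0 ht1
  set A := vertexHalfSum a b e c d f
  set B := quadHalfSum a b e c d f
  have term_le (s) (hs : s ∈ racahRange A B) :
      √(racahSq (qfact t) A B s) ≤ racahConst t * t ^ (B 0 + 2 * (B 0 - B 1)) := by
    obtain ⟨hA, hB⟩ := mem_racahRange.1 hs
    refine (sqrt_racahSq_qfact_le ht0 ht1 h.sum_vertexHalfSum hA hB).trans ?_
    exact mul_le_mul_of_nonneg_left (pow_le_pow_of_le_one ht0.le ht1.le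
      (add_two_mul_sub_le_racahDegree (hB 0) (hB 1) (hB 2) (h.quadHalfSum_one_ne_two hne)))
      hconst.le
  calc |sixj t a b e c d f| ≤ ∑ s ∈ racahRange A B, √(racahSq (qfact t) A B s) :=
        abs_sixj_le_sum_sqrt_racahSq ht0 ht1 h
    _ ≤ #(racahRange A B) * (racahConst t * t ^ (B 0 + 2 * (B 0 - B 1))) :=
        (sum_le_card_nsmul _ _ _ term_le).trans_eq (nsmul_eq_mul _ _)
    _ ≤ (e + 1) * (racahConst t * t ^ (B 0 + 2 * (B 0 - B 1))) :=
        mul_le_mul_of_nonneg_right (by exact_mod_cast h.card_racahRange_le) (by positivity)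

theorem tendsto_inv_pow_mul_sixj {a b c d f : ℕ → ℕ} {e N : ℕ}
    (h : ∀ k, TetAdmissible (a k) (b k) e (c k) (d k) (f k)) (hne : ∀ k, a k + c k ≠ b k + d k)
    (hgrowth : ∀ k, 5 * k ≤ (a k + b k + c k + d k) / 2 +
      2 * ((a k + b k + c k + d k) / 2 - (a k + c k + e + f k) / 2) + N) :
    Tendsto (fun k => (t ^ (4 * k))⁻¹ * sixj t (a k) (b k) e (c k) (d k) (f k))
      atTop (nhds 0) := by
  have hconst := racahConst_pos ht0 ht1
  set K := (e + 1) * racahConst t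
  have sixj_le (k : ℕ) :
      |sixj t (a k) (b k) e (c k) (d k) (f k)| ≤ K * (t ^ (5 * k) / t ^ N) := by
    refine (abs_sixj_le ht0 ht1 (h k) (hne k)).trans ?_
    rw [← mul_assoc]
    refine mul_le_mul_of_nonneg_left ?_ (by positivity)
    rw [le_div_iff₀ (by positivity), ← pow_add]
    exact pow_le_pow_of_le_one ht0.le ht1.le (hgrowth k)
  have scaled_le (k : ℕ) :
      ‖(t ^ (4 * k))⁻¹ * sixj t (a k) (b k) e (c k) (d k) (f k)‖ ≤ K / t ^ N * t ^ k := by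
    calc ‖(t ^ (4 * k))⁻¹ * sixj t (a k) (b k) e (c k) (d k) (f k)‖
        ≤ (t ^ (4 * k))⁻¹ * (K * (t ^ (5 * k) / t ^ N)) := by
          rw [norm_mul, Real.norm_of_nonneg (by positivity), Real.norm_eq_abs]
          exact mul_le_mul_of_nonneg_left (sixj_le k) (by positivity)
      _ = K / t ^ N * t ^ k := by
          field_simp
          ring
  refine squeeze_zero_norm scaled_le ?_
  simpa only [mul_zero] using
    (tendsto_pow_atTop_nhds_zero_of_lt_one ht0.le ht1).const_mul (K / t ^ N)

end SixJ

/-- If a + c ≠ b + d then the limits of the scaled 6j-symbols of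
the second and third kinds are zero. -/
theorem stmt_14 (t : ℝ) (ht0 : 0 < t) (ht1 : t < 1) (a b e c d f : ℕ)
    (h : TetAdmissible a b e c d f) (hne : a + c ≠ b + d) :
    Filter.Tendsto
      (fun k => (t ^ (4 * k))⁻¹ *
        sixj t (a + 2 * k) (b + 2 * k) e (c + 2 * k) (d + 2 * k) (f + 2 * k))
      Filter.atTop (nhds 0) ∧
    Filter.Tendsto
      (fun k => (t ^ (4 * k))⁻¹ *
        sixj t (a + 2 * k) (b + 2 * k) e (c + 2 * k) (d + 2 * k) f)
      Filter.atTop (nhds 0) := by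
  obtain ⟨hade, hbce, habf, hcdf⟩ := h
  constructor
  · exact tendsto_inv_pow_mul_sixj ht0 ht1 (f := fun k => f + 2 * k) (N := a + c + e + f)
      (fun k => ⟨hade.add_add _, hbce.add_add _, habf.add_add_add k, hcdf.add_add_add k⟩)
      (fun k => by omega) fun k => by omega
  · exact tendsto_inv_pow_mul_sixj ht0 ht1 (f := fun _ => f) (N := a + c + e + f)
      (fun k => ⟨hade.add_add _, hbce.add_add _, habf.add_add _, hcdf.add_add _⟩)
      (fun k => by omega) fun k => by omega
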